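/- arXiv:1311.5850 — 6 statements merged into one kernel-verified Lean document; each statement's English description precedes it below -/
import Mathlib

section
/- (Support size bound, elliptic case.) Let γ > 0 and let f : ℝ → ℝ be integrable. Let u : ℝ → ℝ be continuously differentiable with compact support, twice differentiable on the open set U = {x : u(x) ≠ 0}, and satisfy u''(x) = −f(x) + γ·sign(u(x)) for every x ∈ U. Then the Lebesgue measure of U satisfies γ · μ(U) ≤ ∫_U |f(x)| dx. -/
open MeasureTheory

lemma aux_phi (e : ℝ) (he : 0 < e) (s : ℝ) :
    HasDerivAt (fun s : ℝ => s * |s| / (s ^ 2 + e)) (2 * e * |s| / (s ^ 2 + e) ^ 2) s := by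
  have h1 : HasDerivAt (fun s : ℝ => s * |s|) (2 * |s|) s := by
    rcases lt_trichotomy s 0 with h | h | h
    · have := (hasDerivAt_id s).mul (hasDerivAt_abs_neg h)
      refine this.congr_deriv ?_
      simp [abs_of_neg h]; ring
    · subst h
      rw [hasDerivAt_iff_tendsto_slope_zero]
      have : Filter.Tendsto (fun t : ℝ => |t|) (nhdsWithin 0 {0}ᶜ) (nhds (2 * |0|)) := by
        have h := (continuous_abs (G := ℝ)).tendsto 0
        simp only [abs_zero, mul_zero] at h ⊢
        exact h.mono_left nhdsWithin_le_nhds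
      refine this.congr' ?_
      filter_upwards [self_mem_nhdsWithin] with t ht
      have : t ≠ 0 := ht
      simp [this]
    · have := (hasDerivAt_id s).mul (hasDerivAt_abs_pos h)
      refine this.congr_deriv ?_
      simp [abs_of_pos h]; ring
  have h2 : HasDerivAt (fun s : ℝ => s ^ 2 + e) (2 * s) s := by
    simpa using (hasDerivAt_pow 2 s).add_const e
  have h3 : s ^ 2 + e ≠ 0 := by positivity
  refine (h1.div h2 h3).congr_deriv ?_
  congr 1
  ring

lemma aux_zero (a b : ℝ → ℝ) (x : ℝ) (ha : HasDerivAt a 0 x) (ha0 : a x = 0)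
    (hb : ContinuousAt b x) : HasDerivAt (fun y => a y * b y) 0 x := by
  rw [hasDerivAt_iff_isLittleO] at ha ⊢
  simp only [ha0, smul_zero, sub_zero, zero_mul] at ha ⊢
  simpa using ha.mul_isBigO (hb.tendsto.isBigO_one ℝ)

lemma aux_main (γ : ℝ) (f : ℝ → ℝ) (hf : Integrable f)
    (u : ℝ → ℝ) (hu : ContDiff ℝ 1 u) (hsupp : HasCompactSupport u)
    (hpde : ∀ x ∈ {y : ℝ | u y ≠ 0},
      HasDerivAt (deriv u) (-f x + γ * Real.sign (u x)) x) (e : ℝ) (he : 0 < e) :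
    γ * (∫ x, u x ^ 2 / (u x ^ 2 + e)) ≤ ∫ x in {y : ℝ | u y ≠ 0}, |f x| := by
  have hc : Continuous u := hu.continuous
  have hc' : Continuous (deriv u) := hu.continuous_deriv le_rfl
  have hne : ∀ x, u x ^ 2 + e ≠ 0 := fun x => by positivity
  have hU : MeasurableSet {y : ℝ | u y ≠ 0} :=
    (isOpen_ne_fun hc continuous_const).measurableSet
  set φ : ℝ → ℝ := fun x => u x * |u x| / (u x ^ 2 + e) with hφ
  set p : ℝ → ℝ := fun x => u x ^ 2 / (u x ^ 2 + e) with hp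
  set g : ℝ → ℝ := fun x => 2 * e * |u x| / (u x ^ 2 + e) ^ 2 * deriv u x * deriv u x with hg
  have hφc : Continuous φ := by
    apply Continuous.div <;> first | fun_prop | exact hne
  have hpc : Continuous p := by
    apply Continuous.div <;> first | fun_prop | exact hne
  have hgc : Continuous g := by
    refine Continuous.mul (Continuous.mul (Continuous.div (by fun_prop) (by fun_prop) ?_) hc') hc'
    exact fun x => pow_ne_zero 2 (hne x)
  have hle : ∀ x, |φ x| ≤ 1 := fun x => by
    have h0 : 0 < u x ^ 2 + e := by positivity
    simp only [hφ]
    rw [abs_div, abs_mul, abs_abs, abs_of_pos h0, div_le_one h0, abs_mul_abs_self]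
    nlinarith
  have cs : ∀ h : ℝ → ℝ, (∀ x, u x = 0 → h x = 0) → HasCompactSupport h := fun h hh =>
    hsupp.mono (fun x hx hx' => hx (hh x hx'))
  have hpi : Integrable p := hpc.integrable_of_hasCompactSupport (cs _ fun x hx => by simp [hp, hx])
  have hgi : Integrable g := hgc.integrable_of_hasCompactSupport (cs _ fun x hx => by simp [hg, hx])
  have hvi : Integrable (fun x => φ x * deriv u x) :=
    (hφc.mul hc').integrable_of_hasCompactSupport (cs _ fun x hx => by simp [hφ, hx])
  have hfi : Integrable (fun x => φ x * f x) :=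
    hf.bdd_mul (c := 1) hφc.aestronglyMeasurable (Filter.Eventually.of_forall hle)
  have hd : ∀ x, HasDerivAt (fun x => φ x * deriv u x) (g x + (γ * p x - φ x * f x)) x := by
    intro x
    have h1 : HasDerivAt φ (2 * e * |u x| / (u x ^ 2 + e) ^ 2 * deriv u x) x :=
      (aux_phi e he (u x)).comp x ((hu.differentiable one_ne_zero) x).hasDerivAt
    by_cases hx : u x = 0
    · have := aux_zero φ (deriv u) x (by simpa [hx] using h1) (by simp [hφ, hx]) hc'.continuousAt
      simpa [hg, hp, hφ, hx] using this
    · refine (h1.mul (hpde x hx)).congr_deriv ?_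
      have : φ x * Real.sign (u x) = p x := by
        simp only [hφ, hp]
        rcases lt_or_gt_of_ne hx with h | h
        · rw [Real.sign_of_neg h, abs_of_neg h]; ring
        · rw [Real.sign_of_pos h, abs_of_pos h]; ring
      rw [← this]
      simp only [hg]; ring
  have h0 := integral_eq_zero_of_hasDerivAt_of_integrable hd
    (hgi.add ((hpi.const_mul γ).sub hfi)) hvi
  have hsi : Integrable (fun x => γ * p x - φ x * f x) := (hpi.const_mul γ).sub hfi
  rw [integral_add hgi hsi, integral_sub (hpi.const_mul γ) hfi,
    integral_const_mul] at h0
  have hg0 : 0 ≤ ∫ x, g x := integral_nonneg fun x => by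
    simp only [hg, mul_assoc, Pi.zero_apply]
    exact mul_nonneg (by positivity) (mul_self_nonneg _)
  have hfin : ∫ x, φ x * f x ≤ ∫ x in {y : ℝ | u y ≠ 0}, |f x| := by
    rw [← integral_indicator hU]
    refine integral_mono hfi (hf.abs.indicator hU) fun x => ?_
    by_cases hx : u x = 0
    · simp [hφ, hx]
    · rw [Set.indicator_of_mem (show x ∈ {y : ℝ | u y ≠ 0} from hx)]
      calc φ x * f x ≤ |φ x * f x| := le_abs_self _
        _ = |φ x| * |f x| := abs_mul _ _
        _ ≤ 1 * |f x| := by gcongr; exact hle x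
        _ = |f x| := one_mul _
  linarith

/-- **Support size bound, elliptic case.** If `γ > 0`, `f` is integrable, `u` is `C¹` with
compact support, twice differentiable on `U = {u ≠ 0}` with `u'' = −f + γ sign u` there,
then `γ · μ(U) ≤ ∫_U |f|`. -/
theorem stmt_4 (γ : ℝ) (hγ : 0 < γ) (f : ℝ → ℝ) (hf : Integrable f)
    (u : ℝ → ℝ) (hu : ContDiff ℝ 1 u) (hsupp : HasCompactSupport u)
    (hpde : ∀ x ∈ {y : ℝ | u y ≠ 0},
      HasDerivAt (deriv u) (-f x + γ * Real.sign (u x)) x) :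
    γ * (volume {y : ℝ | u y ≠ 0}).toReal ≤ ∫ x in {y : ℝ | u y ≠ 0}, |f x| := by
  have hc : Continuous u := hu.continuous
  have hU : MeasurableSet {y : ℝ | u y ≠ 0} :=
    (isOpen_ne_fun hc continuous_const).measurableSet
  have hfinm : volume {y : ℝ | u y ≠ 0} ≠ ⊤ :=
    ((measure_mono (subset_tsupport u)).trans_lt hsupp.isCompact.measure_lt_top).ne
  have hlim : Filter.Tendsto
      (fun n : ℕ => ∫ x, u x ^ 2 / (u x ^ 2 + 1 / ((n : ℝ) + 1))) Filter.atTop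
      (nhds (∫ x, Set.indicator {y : ℝ | u y ≠ 0} (fun _ => (1 : ℝ)) x)) := by
    refine tendsto_integral_of_dominated_convergence
      (Set.indicator {y : ℝ | u y ≠ 0} (fun _ => (1 : ℝ))) ?_ ?_ ?_ ?_
    · intro n
      refine Continuous.aestronglyMeasurable (Continuous.div (by fun_prop) (by fun_prop) ?_)
      intro x; positivity
    · exact (integrable_indicator_iff hU).2 (integrableOn_const hfinm)
    · intro n
      refine Filter.Eventually.of_forall fun x => ?_
      by_cases hx : u x = 0
      · simp [hx]
      · rw [Set.indicator_of_mem (show x ∈ {y : ℝ | u y ≠ 0} from hx)]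
        have h0 : (0 : ℝ) < 1 / ((n : ℝ) + 1) := by positivity
        rw [Real.norm_of_nonneg (by positivity)]
        exact div_le_one_of_le₀ (by linarith) (by positivity)
    · refine Filter.Eventually.of_forall fun x => ?_
      by_cases hx : u x = 0
      · simp [hx]
      · rw [Set.indicator_of_mem (show x ∈ {y : ℝ | u y ≠ 0} from hx)]
        have h2 : u x ^ 2 ≠ 0 := pow_ne_zero 2 hx
        have := (tendsto_const_nhds (x := u x ^ 2)).div
          ((tendsto_const_nhds (x := u x ^ 2)).add
            (tendsto_one_div_add_atTop_nhds_zero_nat (𝕜 := ℝ))) (by simpa using hx)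
        rw [add_zero, div_self h2] at this
        exact this
  rw [integral_indicator hU, setIntegral_const] at hlim
  have := le_of_tendsto (hlim.const_mul γ) (Filter.Eventually.of_forall fun n : ℕ =>
    aux_main γ f hf u hu hsupp hpde (1 / ((n : ℝ) + 1)) (by positivity))
  simpa [Measure.real] using this
end

section
/- (Refined support size bound, elliptic case.) Let γ > 0, let α, β ≥ 0 with α + β = 1 and α > 0, and let f : ℝ → ℝ be integrable. Let u : ℝ → ℝ be continuously differentiable with compact support, twice differentiable on the open set U = {x : u(x) ≠ 0}, and satisfy u''(x) = −f(x) + γ·sign(u(x)) for every x ∈ U. Then αγ · μ(U) ≤ ∫_ℝ (|f(x)| − βγ)⁺ dx, where (r)⁺ = max(r, 0). -/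
open MeasureTheory

lemma aux_sign (n : ℝ) (hn : 0 < n) (t : ℝ) :
    Real.arctan (n * t) * Real.sign t = |Real.arctan (n * t)| := by
  rcases lt_trichotomy t 0 with h | h | h
  · have : Real.arctan (n * t) < 0 := by
      rw [Real.arctan_lt_zero]; exact mul_neg_of_pos_of_neg hn h
    rw [Real.sign_of_neg h, abs_of_neg this]; ring
  · subst h; simp
  · have : 0 < Real.arctan (n * t) := by
      rw [Real.arctan_pos]; positivity
    rw [Real.sign_of_pos h, abs_of_pos this]; ring

lemma aux_abs_le (t : ℝ) : |Real.arctan t| ≤ Real.pi / 2 :=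
  abs_le.2 ⟨(Real.neg_pi_div_two_lt_arctan t).le, (Real.arctan_lt_pi_div_two t).le⟩

lemma aux_deriv (u v : ℝ → ℝ) (x n w : ℝ) (hu : HasDerivAt u (v x) x) (hv : ContinuousAt v x)
    (h : u x ≠ 0 → HasDerivAt v w x) :
    HasDerivAt (fun y => Real.arctan (n * u y) * v y)
      (Real.arctan (n * u x) * w + 1 / (1 + (n * u x) ^ 2) * n * v x ^ 2) x := by
  have hg : HasDerivAt (fun y => Real.arctan (n * u y))
      (1 / (1 + (n * u x) ^ 2) * (n * v x)) x := (hu.const_mul n).arctan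
  by_cases h0 : u x = 0
  · rw [hasDerivAt_iff_tendsto_slope] at hg ⊢
    have h1 := hg.mul (hv.tendsto.mono_left (nhdsWithin_le_nhds (s := {x}ᶜ)))
    refine (h1.congr fun y => ?_).trans ?_
    · simp [slope, h0]; ring
    · rw [h0]; simp; ring
  · exact (hg.mul (h h0)).congr_deriv (by ring)

lemma aux_bound (γ α β : ℝ) (hγ : 0 < γ) (hβ : 0 ≤ β)
    (hαβ : α + β = 1)
    (f : ℝ → ℝ) (hf : Integrable f)
    (u : ℝ → ℝ) (hu : ContDiff ℝ 1 u) (hsupp : HasCompactSupport u)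
    (hpde : ∀ x ∈ {y : ℝ | u y ≠ 0},
      HasDerivAt (deriv u) (-f x + γ * Real.sign (u x)) x) (n : ℝ) (hn : 0 < n) :
    α * γ * (∫ x, |Real.arctan (n * u x)|) ≤
      Real.pi / 2 * ∫ x, max (|f x| - β * γ) 0 := by
  have hv : Continuous (deriv u) := hu.continuous_deriv le_rfl
  have huc := hu.continuous
  have hGc : Continuous fun x => Real.arctan (n * u x) := by fun_prop
  have hGs : HasCompactSupport fun x => Real.arctan (n * u x) :=
    hsupp.comp_left (g := fun t => Real.arctan (n * t)) (by simp)
  have hGi := hGc.integrable_of_hasCompactSupport (μ := volume) hGs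
  have hAi : Integrable fun x => |Real.arctan (n * u x)| := hGi.abs
  have hGf : Integrable fun x => Real.arctan (n * u x) * f x :=
    hf.bdd_mul (c := Real.pi / 2) hGc.aestronglyMeasurable
      (Filter.Eventually.of_forall fun x => aux_abs_le _)
  have hQi : Integrable fun x => 1 / (1 + (n * u x) ^ 2) * n * deriv u x ^ 2 := by
    apply Continuous.integrable_of_hasCompactSupport
    · have : ∀ x, 1 + (n * u x) ^ 2 ≠ 0 := fun x => by positivity
      fun_prop (disch := assumption)
    · exact HasCompactSupport.mul_left
        (hsupp.deriv.comp_left (g := fun t : ℝ => t ^ 2) (by simp))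
  have hvi : Integrable fun x => Real.arctan (n * u x) * deriv u x :=
    (hGc.mul hv).integrable_of_hasCompactSupport hGs.mul_right
  have hD := fun x => aux_deriv u (deriv u) x n (-f x + γ * Real.sign (u x))
    ((hu.differentiable (by norm_num)) x).hasDerivAt hv.continuousAt (hpde x)
  have hEq : (fun x => Real.arctan (n * u x) * (-f x + γ * Real.sign (u x))
      + 1 / (1 + (n * u x) ^ 2) * n * deriv u x ^ 2) =
      fun x => (γ * |Real.arctan (n * u x)| - Real.arctan (n * u x) * f x)
        + 1 / (1 + (n * u x) ^ 2) * n * deriv u x ^ 2 := by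
    funext x; rw [← aux_sign n hn]; ring
  have hI0 : Integrable fun x => γ * |Real.arctan (n * u x)| - Real.arctan (n * u x) * f x :=
    (hAi.const_mul γ).sub hGf
  have h0 := integral_eq_zero_of_hasDerivAt_of_integrable hD
    (by rw [hEq]; exact hI0.add hQi) hvi
  rw [hEq, integral_add hI0 hQi, integral_sub (hAi.const_mul γ) hGf, integral_const_mul] at h0
  have hQ : 0 ≤ ∫ x, 1 / (1 + (n * u x) ^ 2) * n * deriv u x ^ 2 :=
    integral_nonneg fun x => by positivity
  have hMi : Integrable fun x => max (|f x| - β * γ) 0 := by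
    refine hf.abs.mono' ?_ (Filter.Eventually.of_forall fun x => ?_)
    · exact ((hf.abs.aestronglyMeasurable.sub aestronglyMeasurable_const).sup
        aestronglyMeasurable_const)
    · rw [Real.norm_eq_abs, abs_of_nonneg (le_max_right _ _)]
      exact max_le (by nlinarith [mul_nonneg hβ hγ.le]) (abs_nonneg _)
  have hlast : ∫ x, Real.arctan (n * u x) * f x ≤
      ∫ x, (Real.pi / 2 * max (|f x| - β * γ) 0 + β * γ * |Real.arctan (n * u x)|) := by
    refine integral_mono hGf ((hMi.const_mul _).add (hAi.const_mul _)) fun x => ?_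
    have h1 : Real.arctan (n * u x) * f x ≤ |Real.arctan (n * u x)| * |f x| := by
      rw [← abs_mul]; exact le_abs_self _
    have h2 := aux_abs_le (n * u x)
    have h3 := abs_nonneg (Real.arctan (n * u x))
    have h4 := le_max_left (|f x| - β * γ) 0
    have h5 := le_max_right (|f x| - β * γ) 0
    simp only
    nlinarith [mul_le_mul_of_nonneg_left h4 h3, mul_le_mul_of_nonneg_right h2 h5]
  rw [integral_add (hMi.const_mul _) (hAi.const_mul _), integral_const_mul,
    integral_const_mul] at hlast
  have : α = 1 - β := by linarith
  subst this
  linarith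

/-- **Refined support size bound, elliptic case.** If `γ > 0`, `α, β ≥ 0` with
`α + β = 1` and `α > 0`, `f` integrable, and `u` is `C¹` with compact support,
twice differentiable on `U = {u ≠ 0}` with `u'' = −f + γ sign u` there, then
`αγ · μ(U) ≤ ∫ (|f| − βγ)⁺`. -/
theorem stmt_5 (γ α β : ℝ) (hγ : 0 < γ) (hα : 0 ≤ α) (hβ : 0 ≤ β)
    (hαβ : α + β = 1) (hα' : 0 < α)
    (f : ℝ → ℝ) (hf : Integrable f)
    (u : ℝ → ℝ) (hu : ContDiff ℝ 1 u) (hsupp : HasCompactSupport u)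
    (hpde : ∀ x ∈ {y : ℝ | u y ≠ 0},
      HasDerivAt (deriv u) (-f x + γ * Real.sign (u x)) x) :
    α * γ * (volume {y : ℝ | u y ≠ 0}).toReal ≤ ∫ x, max (|f x| - β * γ) 0 := by
  have huc := hu.continuous
  have hUo : IsOpen {y : ℝ | u y ≠ 0} := isOpen_ne_fun huc continuous_const
  have hUm := hUo.measurableSet
  have hfin : volume {y : ℝ | u y ≠ 0} ≠ ⊤ :=
    ((measure_mono (subset_tsupport u)).trans_lt hsupp.isCompact.measure_lt_top).ne
  have hint : ∀ c : ℝ, Integrable ({y : ℝ | u y ≠ 0}.indicator fun _ => c) := fun c =>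
    (integrable_indicator_iff hUm).2 (integrableOn_const hfin)
  have hlim : Filter.Tendsto (fun n : ℕ => ∫ x, |Real.arctan (((n : ℝ) + 1) * u x)|) Filter.atTop
      (nhds (∫ x, {y : ℝ | u y ≠ 0}.indicator (fun _ => Real.pi / 2) x)) := by
    refine tendsto_integral_of_dominated_convergence
      ({y : ℝ | u y ≠ 0}.indicator fun _ => Real.pi / 2) ?_ (hint _) ?_ ?_
    · intro n
      exact Continuous.aestronglyMeasurable (by fun_prop)
    · intro n
      refine Filter.Eventually.of_forall fun x => ?_
      by_cases h : u x = 0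
      · simp [h]
      · rw [Set.indicator_of_mem (by exact h), Real.norm_eq_abs, abs_abs]
        exact aux_abs_le _
    · refine Filter.Eventually.of_forall fun x => ?_
      have hT : Filter.Tendsto (fun n : ℕ => (n : ℝ) + 1) Filter.atTop Filter.atTop :=
        Filter.tendsto_atTop_add_const_right _ _ tendsto_natCast_atTop_atTop
      have hpi := Real.pi_pos
      rcases lt_trichotomy (u x) 0 with h | h | h
      · rw [Set.indicator_of_mem (by exact h.ne)]
        have := ((Real.tendsto_arctan_atBot.mono_right nhdsWithin_le_nhds).comp
          (hT.atTop_mul_const_of_neg h)).abs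
        rwa [abs_neg, abs_of_pos (by positivity)] at this
      · simp [h]
      · rw [Set.indicator_of_mem (by exact h.ne')]
        have := ((Real.tendsto_arctan_atTop.mono_right nhdsWithin_le_nhds).comp
          (hT.atTop_mul_const h)).abs
        rwa [abs_of_pos (by positivity)] at this
  have hle := le_of_tendsto (hlim.const_mul (α * γ)) (Filter.Eventually.of_forall fun n =>
    aux_bound γ α β hγ hβ hαβ f hf u hu hsupp hpde (n + 1) (by positivity))
  rw [integral_indicator hUm, setIntegral_const, smul_eq_mul, Measure.real] at hle
  have hpi := Real.pi_pos
  refine le_of_mul_le_mul_left ?_ (show 0 < Real.pi / 2 by positivity)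
  linarith
end

section
/- Let γ > 0 and f : ℝ → ℝ with sup_x |f(x)| < γ. Let u : ℝ → ℝ be continuously differentiable with compact support, twice differentiable on {x : u(x) ≠ 0}, and satisfy u''(x) = −f(x) + γ·sign(u(x)) for every x with u(x) ≠ 0. Then u ≡ 0. -/
open MeasureTheory

/-- A point where the second derivative is positive is not a local maximum. -/
lemma not_max_aux (u : ℝ → ℝ) (hu : Continuous u) (x a : ℝ) (ha : 0 < a)
    (hd : HasDerivAt (deriv u) a x) (hm : ∀ y, u y ≤ u x) : False := by
  have hmax : IsLocalMax u x := Filter.Eventually.of_forall hm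
  have hmin : IsLocalMin u x :=
    isLocalMin_of_deriv_deriv_pos (by rw [hd.deriv]; exact ha) hmax.deriv_eq_zero hu.continuousAt
  have hc : u =ᶠ[nhds x] fun _ => u x := by
    filter_upwards [hmin] with y hy
    exact le_antisymm (hm y) hy
  have h1 := hc.deriv.deriv_eq
  rw [hd.deriv] at h1
  simp at h1
  linarith

lemma nonpos_aux (γ : ℝ) (f : ℝ → ℝ) (hf : ∃ c : ℝ, c < γ ∧ ∀ x, |f x| ≤ c)
    (u : ℝ → ℝ) (hu : Continuous u) (hsupp : HasCompactSupport u)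
    (hpde : ∀ x, 0 < u x → HasDerivAt (deriv u) (-f x + γ) x) (x : ℝ) : u x ≤ 0 := by
  obtain ⟨c, hc, hf⟩ := hf
  obtain ⟨m, hm⟩ := hu.exists_forall_ge_of_hasCompactSupport hsupp
  by_contra! h
  have hpos : 0 < u m := h.trans_le (hm x)
  have := (abs_le.1 (hf m)).2
  exact not_max_aux u hu m _ (by linarith) (hpde m hpos) hm

/-- If `sup_x |f x| < γ` and `u` is `C¹` with compact support, twice differentiable on
`{u ≠ 0}` with `u'' = −f + γ sign u` there, then `u ≡ 0`. -/
theorem stmt_6 (γ : ℝ) (hγ : 0 < γ) (f : ℝ → ℝ)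
    (hf : ∃ c : ℝ, c < γ ∧ ∀ x, |f x| ≤ c)
    (u : ℝ → ℝ) (hu : ContDiff ℝ 1 u) (hsupp : HasCompactSupport u)
    (hpde : ∀ x, u x ≠ 0 →
      HasDerivAt (deriv u) (-f x + γ * Real.sign (u x)) x) :
    ∀ x, u x = 0 := by
  intro x
  apply le_antisymm
  · refine nonpos_aux γ f hf u hu.continuous hsupp (fun y hy => ?_) x
    simpa [Real.sign_of_pos hy] using hpde y hy.ne'
  · have hs : HasCompactSupport (fun y => -u y) := hsupp.neg
    have := nonpos_aux γ (fun y => -f y) (by simpa using hf) (fun y => -u y)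
      hu.continuous.neg hs (fun y hy => ?_) x
    · linarith
    · have hy' : u y < 0 := by linarith
      have h := (hpde y hy'.ne).neg
      rw [Real.sign_of_neg hy'] at h
      have e : deriv (fun y => -u y) = -deriv u := by
        ext z
        simp
      rw [e]
      have e2 : -(-f y + γ * -1) = - -f y + γ := by ring
      rw [e2] at h
      exact h
end

section
/- (Support size bound, parabolic case.) Let γ > 0, T > 0, α, β ≥ 0 with α + β = 1 and α > 0, and let f : ℝ → ℝ be integrable and g : ℝ → ℝ be integrable. Let u : ℝ × [0,T] → ℝ be continuous, supported in K × [0,T] for a fixed compact set K, continuously differentiable in t and twice continuously differentiable in x on the open set W = {(x,t) : u(x,t) ≠ 0}, continuously differentiable in x everywhere, with u(·,0) = g, and satisfying ∂_t u = ∂²_x u + f − γ·sign(u) on W. Then αγ · μ₂(W) ≤ ∫_ℝ |g(x)| dx + ∫₀^T ∫_ℝ (|f(x)| − βγ)⁺ dx dt, where μ₂ is two-dimensional Lebesgue measure on spacetime and (r)⁺ = max(r, 0). -/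
open MeasureTheory Set

/-- A smooth truncation `η` of the sign function, with its derivative `ψ` and primitive `φ`. -/
lemma exists_cutoff (ε : ℝ) (hε : 0 < ε) : ∃ η ψ φ : ℝ → ℝ,
    (∀ r, HasDerivAt η (ψ r) r) ∧ Continuous ψ ∧ (∀ r, 0 ≤ ψ r) ∧
    (∀ r, HasDerivAt φ (η r) r) ∧ (∀ r, |r| < ε → η r = 0 ∧ φ r = 0) ∧
    (∀ r, 0 ≤ φ r) ∧ (∀ r, φ r ≤ |r|) ∧ (∀ r, |η r| ≤ 1) ∧
    (∀ r, η r * Real.sign r = |η r|) ∧ (∀ r, 2 * ε ≤ |r| → |η r| = 1) := by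
  set η : ℝ → ℝ := fun r =>
    Real.smoothTransition (r / ε - 1) - Real.smoothTransition (-r / ε - 1) with hη
  have hCD : ContDiff ℝ 1 η := by
    apply ContDiff.sub
    · exact (Real.smoothTransition.contDiff (n := 1)).comp
        ((contDiff_id.div_const ε).sub contDiff_const)
    · exact (Real.smoothTransition.contDiff (n := 1)).comp
        ((contDiff_id.neg.div_const ε).sub contDiff_const)
  have hmono : Monotone η := by
    intro x y hxy
    have h1 : Real.smoothTransition (x / ε - 1) ≤ Real.smoothTransition (y / ε - 1) :=
      Real.smoothTransition.monotone (by gcongr)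
    have h2 : Real.smoothTransition (-y / ε - 1) ≤ Real.smoothTransition (-x / ε - 1) :=
      Real.smoothTransition.monotone (by gcongr)
    simp only [hη]; linarith
  have hneg : ∀ r, r ≤ ε → Real.smoothTransition (r / ε - 1) = 0 := by
    intro r hr
    apply Real.smoothTransition.zero_of_nonpos
    have : r / ε ≤ 1 := (div_le_one hε).2 hr
    linarith
  have hone : ∀ r, 2 * ε ≤ r → Real.smoothTransition (r / ε - 1) = 1 := by
    intro r hr
    apply Real.smoothTransition.one_of_one_le
    have : 2 ≤ r / ε := (le_div_iff₀ hε).2 hr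
    linarith
  have hz : ∀ r, |r| < ε → η r = 0 := by
    intro r hr
    have := abs_lt.1 hr
    simp only [hη]
    rw [hneg r (by linarith), hneg (-r) (by linarith), sub_zero]
  have hpos : ∀ r, 0 ≤ r → 0 ≤ η r := by
    intro r hr
    have := hmono hr
    rwa [hz 0 (by simpa using hε)] at this
  have hnp : ∀ r, r ≤ 0 → η r ≤ 0 := by
    intro r hr
    have := hmono hr
    rwa [hz 0 (by simpa using hε)] at this
  have habs : ∀ r, |η r| ≤ 1 := by
    intro r
    have h1 := Real.smoothTransition.nonneg (r / ε - 1)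
    have h2 := Real.smoothTransition.nonneg (-r / ε - 1)
    have h3 := Real.smoothTransition.le_one (r / ε - 1)
    have h4 := Real.smoothTransition.le_one (-r / ε - 1)
    rw [abs_le]; simp only [hη]
    constructor <;> linarith
  have hηc : Continuous η := hCD.continuous
  refine ⟨η, deriv η, fun r => ∫ s in (0 : ℝ)..r, η s, ?_, ?_, ?_, ?_, ?_, ?_, ?_, habs, ?_, ?_⟩
  · intro r
    exact (hCD.differentiable (by norm_num) r).hasDerivAt
  · exact hCD.continuous_deriv (by norm_num)
  · intro r; exact hmono.deriv_nonneg
  · intro r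
    exact intervalIntegral.integral_hasDerivAt_right (hηc.intervalIntegrable _ _)
      hηc.stronglyMeasurable.stronglyMeasurableAtFilter hηc.continuousAt
  · intro r hr
    refine ⟨hz r hr, ?_⟩
    have : ∫ s in (0 : ℝ)..r, η s = ∫ s in (0 : ℝ)..r, (0 : ℝ) := by
      apply intervalIntegral.integral_congr
      intro s hs
      apply hz
      have := abs_sub_left_of_mem_uIcc hs
      simp only [sub_zero] at this
      linarith
    simpa using this
  · intro r
    rcases le_total 0 r with h | h
    · exact intervalIntegral.integral_nonneg h fun s hs => hpos s hs.1
    · change 0 ≤ ∫ s in (0 : ℝ)..r, η s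
      rw [intervalIntegral.integral_symm, ← intervalIntegral.integral_neg]
      exact intervalIntegral.integral_nonneg h fun s hs => by
        have := hnp s hs.2
        linarith
  · intro r
    have := intervalIntegral.norm_integral_le_of_norm_le_const (a := (0 : ℝ)) (b := r) (f := η)
      (C := 1) (fun s _ => habs s)
    simp only [sub_zero, one_mul] at this
    exact (le_abs_self _).trans this
  · intro r
    rcases lt_trichotomy r 0 with h | h | h
    · rw [Real.sign_of_neg h, abs_of_nonpos (hnp r h.le)]; ring
    · subst h; rw [hz 0 (by simpa using hε)]; simp
    · rw [Real.sign_of_pos h, abs_of_nonneg (hpos r h.le)]; ring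
  · intro r hr
    simp only [hη]
    rcases le_abs.1 hr with h | h
    · rw [hone r h, hneg (-r) (by linarith)]; simp
    · rw [hone (-r) h, hneg r (by linarith)]; simp

/-- Multiplying by a cutoff vanishing near `u = 0` makes functions continuous on `W` continuous
on the whole strip. -/
lemma cutoff_continuousOn (T ε : ℝ) (hε : 0 < ε) (u : ℝ → ℝ → ℝ) (W : Set (ℝ × ℝ))
    (hW : W = {p : ℝ × ℝ | p.2 ∈ Icc (0 : ℝ) T ∧ u p.1 p.2 ≠ 0})
    (hu_cont : Continuous fun p : ℝ × ℝ => u p.1 p.2)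
    (η : ℝ → ℝ) (hη : Continuous η) (hz : ∀ r, |r| < ε → η r = 0)
    (v : ℝ → ℝ → ℝ) (hv : ContinuousOn (fun p : ℝ × ℝ => v p.1 p.2) W) :
    ContinuousOn (fun p : ℝ × ℝ => η (u p.1 p.2) * v p.1 p.2) {p | p.2 ∈ Icc (0 : ℝ) T} := by
  intro p hp
  by_cases h : u p.1 p.2 = 0
  · have hev : ∀ᶠ q in nhds p, |u q.1 q.2| < ε := by
      apply (hu_cont.abs.continuousAt (x := p)).eventually_lt_const
      simpa [h] using hε
    have : (fun p : ℝ × ℝ => η (u p.1 p.2) * v p.1 p.2) =ᶠ[nhds p] fun _ => 0 := by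
      filter_upwards [hev] with q hq
      rw [hz _ hq, zero_mul]
    exact (continuousAt_const.congr this.symm).continuousWithinAt
  · have hpW : p ∈ W := by rw [hW]; exact ⟨hp, h⟩
    have h1 := hv p hpW
    have hopen : {q : ℝ × ℝ | u q.1 q.2 ≠ 0} ∈ nhds p :=
      (isOpen_ne_fun hu_cont continuous_const).mem_nhds h
    have hWe : W = {p : ℝ × ℝ | p.2 ∈ Icc (0 : ℝ) T} ∩ {q : ℝ × ℝ | u q.1 q.2 ≠ 0} := by
      rw [hW]; rfl
    rw [hWe, continuousWithinAt_inter hopen] at h1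
    exact (hη.comp hu_cont).continuousWithinAt.mul h1

/-- The bound for the superlevel sets `{|u| ≥ 2ε}`. -/
lemma superlevel_bound (γ T α β : ℝ) (hγ : 0 < γ) (hT : 0 < T)
    (hβ : 0 ≤ β) (hαβ : α + β = 1) (hα' : 0 < α)
    (f g : ℝ → ℝ) (hf : Integrable f) (hg : Integrable g)
    (u ut ux uxx : ℝ → ℝ → ℝ) (a b : ℝ) (hab : a ≤ b)
    (W : Set (ℝ × ℝ))
    (hW : W = {p : ℝ × ℝ | p.2 ∈ Icc (0 : ℝ) T ∧ u p.1 p.2 ≠ 0})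
    (hu_cont : Continuous fun p : ℝ × ℝ => u p.1 p.2)
    (hu_supp : ∀ x t, x ∉ Ioo a b → u x t = 0)
    (hut : ∀ p ∈ W, HasDerivAt (fun s => u p.1 s) (ut p.1 p.2) p.2)
    (huxx : ∀ p ∈ W, HasDerivAt (fun y => ux y p.2) (uxx p.1 p.2) p.1)
    (hut_cont : ContinuousOn (fun p : ℝ × ℝ => ut p.1 p.2) W)
    (huxx_cont : ContinuousOn (fun p : ℝ × ℝ => uxx p.1 p.2) W)
    (hux : ∀ x t, HasDerivAt (fun y => u y t) (ux x t) x)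
    (hux_cont : Continuous fun p : ℝ × ℝ => ux p.1 p.2)
    (hu0 : ∀ x, u x 0 = g x)
    (hpde : ∀ p ∈ W, ut p.1 p.2 = uxx p.1 p.2 + f p.1 - γ * Real.sign (u p.1 p.2))
    (ε : ℝ) (hε : 0 < ε) :
    α * γ * volume.real {p : ℝ × ℝ | p.2 ∈ Icc (0 : ℝ) T ∧ 2 * ε ≤ |u p.1 p.2|} ≤
      (∫ x, |g x|) + T * ∫ x, max (|f x| - β * γ) 0 := by
  obtain ⟨η, ψ, φ, hη, hψc, hψ0, hφ, hz, hφ0, hφ1, hη1, hηs, hη2⟩ := exists_cutoff ε hε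
  have hηc : Continuous η := continuous_iff_continuousAt.2 fun r => (hη r).continuousAt
  have hφc : Continuous φ := continuous_iff_continuousAt.2 fun r => (hφ r).continuousAt
  have hη0 : η 0 = 0 := (hz 0 (by simpa using hε)).1
  have hFc := cutoff_continuousOn T ε hε u W hW hu_cont η hηc (fun r hr => (hz r hr).1) ut hut_cont
  have hGc := cutoff_continuousOn T ε hε u W hW hu_cont η hηc (fun r hr => (hz r hr).1) uxx
    huxx_cont
  set m : ℝ → ℝ := fun x => max (|f x| - β * γ) 0 with hm
  have hβγ : 0 ≤ β * γ := mul_nonneg hβ hγ.le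
  have hm0 : ∀ x, 0 ≤ m x := fun x => le_max_right _ _
  have hmi : Integrable m := by
    refine hf.mono ?_ ?_
    · exact ((hf.1.norm.sub aestronglyMeasurable_const).sup aestronglyMeasurable_const)
    · refine Filter.Eventually.of_forall fun x => ?_
      rw [Real.norm_of_nonneg (hm0 x), Real.norm_eq_abs]
      exact max_le (by linarith) (abs_nonneg _)
  have hIcc : ∀ (h : ℝ → ℝ) (c d : ℝ), c ≤ d → ∫ x in Icc c d, h x = ∫ x in c..d, h x := by
    intro h c d hcd
    rw [integral_Icc_eq_integral_Ioc, intervalIntegral.integral_of_le hcd]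
  -- the diffusion term has a sign
  have hG : ∀ t ∈ Icc (0 : ℝ) T, ∫ x in Icc a b, η (u x t) * uxx x t ≤ 0 := by
    intro t ht
    have hc1 : Continuous fun x => u x t := hu_cont.comp (Continuous.prodMk_left t)
    have hc2 : Continuous fun x => ux x t := hux_cont.comp (Continuous.prodMk_left t)
    have hcG : Continuous fun x => η (u x t) * uxx x t := by
      rw [← continuousOn_univ]
      exact hGc.comp (f := fun x : ℝ => (x, t)) (Continuous.prodMk_left t).continuousOn
        (fun x _ => ht)
    have hcP : Continuous fun x => ψ (u x t) * ux x t * ux x t :=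
      ((hψc.comp hc1).mul hc2).mul hc2
    have hd : ∀ x, HasDerivAt (fun x => η (u x t) * ux x t)
        (ψ (u x t) * ux x t * ux x t + η (u x t) * uxx x t) x := by
      intro x
      by_cases h : u x t = 0
      · have hev : ∀ᶠ y in nhds x, |u y t| < ε := by
          apply (hc1.abs.continuousAt (x := x)).eventually_lt_const
          simpa [h] using hε
        have he : (fun x => η (u x t) * ux x t) =ᶠ[nhds x] fun _ => 0 := by
          filter_upwards [hev] with y hy
          rw [(hz _ hy).1, zero_mul]
        have hψz : ψ 0 = 0 := by
          have he' : η =ᶠ[nhds 0] fun _ => 0 := by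
            have : ∀ᶠ r : ℝ in nhds 0, |r| < ε :=
              (continuous_abs.continuousAt (x := (0 : ℝ))).eventually_lt_const
                (by simpa using hε)
            filter_upwards [this] with r hr
            exact (hz r hr).1
          exact (hη 0).unique ((hasDerivAt_const 0 (0 : ℝ)).congr_of_eventuallyEq he')
        rw [h, hψz, hη0]
        simpa using (hasDerivAt_const x (0 : ℝ)).congr_of_eventuallyEq he
      · have hp : (x, t) ∈ W := by rw [hW]; exact ⟨ht, h⟩
        have h1 := huxx _ hp
        have h2 : HasDerivAt (fun y => η (u y t)) (ψ (u x t) * ux x t) x :=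
          (hη (u x t)).comp x (hux x t)
        exact h2.mul h1
    have hFTC := intervalIntegral.integral_eq_sub_of_hasDerivAt (a := a) (b := b)
      (fun x _ => hd x) ((hcP.add hcG).intervalIntegrable _ _)
    rw [hu_supp b t (by simp), hu_supp a t (by simp), hη0,
      intervalIntegral.integral_add (hcP.intervalIntegrable _ _) (hcG.intervalIntegrable _ _)]
      at hFTC
    have hP0 : 0 ≤ ∫ x in a..b, ψ (u x t) * ux x t * ux x t :=
      intervalIntegral.integral_nonneg hab fun x _ => by
        rw [mul_assoc]; exact mul_nonneg (hψ0 _) (mul_self_nonneg _)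
    rw [hIcc _ _ _ hab]
    linarith
  -- the time derivative term
  have hF : ∀ x, ∫ t in Icc (0 : ℝ) T, η (u x t) * ut x t = φ (u x T) - φ (g x) := by
    intro x
    have hc1 : Continuous fun t => u x t := hu_cont.comp (Continuous.prodMk_right x)
    have hcF : ContinuousOn (fun t => η (u x t) * ut x t) (Icc 0 T) :=
      hFc.comp (f := fun t : ℝ => (x, t)) (Continuous.prodMk_right x).continuousOn
        (fun t ht => ht)
    rw [hIcc _ _ _ hT.le, ← hu0]
    apply intervalIntegral.integral_eq_sub_of_hasDerivAt (f := fun t => φ (u x t))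
    · intro t ht
      rw [uIcc_of_le hT.le] at ht
      by_cases h : u x t = 0
      · have hev : ∀ᶠ s in nhds t, |u x s| < ε := by
          apply (hc1.abs.continuousAt (x := t)).eventually_lt_const
          simpa [h] using hε
        have he : (fun s => φ (u x s)) =ᶠ[nhds t] fun _ => 0 := by
          filter_upwards [hev] with y hy
          exact (hz _ hy).2
        rw [h, hη0]
        simpa using (hasDerivAt_const t (0 : ℝ)).congr_of_eventuallyEq he
      · have hp : (x, t) ∈ W := by rw [hW]; exact ⟨ht, h⟩
        exact (hφ (u x t)).comp t (hut _ hp)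
    · apply ContinuousOn.intervalIntegrable
      rwa [uIcc_of_le hT.le]
  -- pointwise inequality
  have hpt : ∀ t ∈ Icc (0 : ℝ) T, ∀ x,
      η (u x t) * ut x t + α * γ * |η (u x t)| ≤ η (u x t) * uxx x t + m x := by
    intro t ht x
    by_cases h : u x t = 0
    · rw [h, hη0]; simpa using hm0 x
    · have hp : (x, t) ∈ W := by rw [hW]; exact ⟨ht, h⟩
      have h1 : ut x t = uxx x t + f x - γ * Real.sign (u x t) := hpde _ hp
      have h2 := hηs (u x t)
      have h3 : η (u x t) * f x ≤ |η (u x t)| * |f x| := by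
        rw [← abs_mul]; exact le_abs_self _
      have h4 : |η (u x t)| * (|f x| - β * γ) ≤ m x := by
        calc _ ≤ |η (u x t)| * m x :=
              mul_le_mul_of_nonneg_left (le_max_left _ _) (abs_nonneg _)
          _ ≤ 1 * m x := mul_le_mul_of_nonneg_right (hη1 _) (hm0 x)
          _ = m x := one_mul _
      have h5 : α = 1 - β := by linarith
      have h6 : η (u x t) * ut x t = η (u x t) * uxx x t + η (u x t) * f x
          - γ * |η (u x t)| := by rw [h1, ← h2]; ring
      rw [h6, h5]
      nlinarith
  -- integrability on the rectangle
  have hRc : IsCompact (Icc a b ×ˢ Icc (0 : ℝ) T) := isCompact_Icc.prod isCompact_Icc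
  have hsub : Icc a b ×ˢ Icc (0 : ℝ) T ⊆ {p : ℝ × ℝ | p.2 ∈ Icc (0 : ℝ) T} := fun p hp => hp.2
  have hFi : IntegrableOn (fun p : ℝ × ℝ => η (u p.1 p.2) * ut p.1 p.2) (Icc a b ×ˢ Icc (0 : ℝ) T)
      volume := (hFc.mono hsub).integrableOn_compact hRc
  have hHcont : Continuous fun p : ℝ × ℝ => |η (u p.1 p.2)| := (hηc.comp hu_cont).abs
  have hHi : IntegrableOn (fun p : ℝ × ℝ => |η (u p.1 p.2)|) (Icc a b ×ˢ Icc (0 : ℝ) T)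
      volume := hHcont.continuousOn.integrableOn_compact hRc
  have hSi : IntegrableOn (fun p : ℝ × ℝ => η (u p.1 p.2) * ut p.1 p.2 + α * γ * |η (u p.1 p.2)|)
      (Icc a b ×ˢ Icc (0 : ℝ) T) volume := hFi.add (hHi.const_mul _)
  have hle : ∫ p in Icc a b ×ˢ Icc (0 : ℝ) T,
      (η (u p.1 p.2) * ut p.1 p.2 + α * γ * |η (u p.1 p.2)|) ≤ T * ∫ x, m x := by
    have hSi' := hSi
    rw [IntegrableOn, Measure.volume_eq_prod, ← Measure.prod_restrict] at hSi'
    rw [Measure.volume_eq_prod, ← Measure.prod_restrict, integral_prod_symm _ hSi']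
    have hc : T * ∫ x, m x = ∫ t in Icc (0 : ℝ) T, ∫ x, m x := by
      rw [setIntegral_const]; simp [Measure.real, hT.le]
    rw [hc]
    apply setIntegral_mono_on hSi'.integral_prod_right (integrableOn_const (by simp))
      measurableSet_Icc
    intro t ht
    have hcG : Continuous fun x => η (u x t) * uxx x t := by
      rw [← continuousOn_univ]
      exact hGc.comp (f := fun x : ℝ => (x, t)) (Continuous.prodMk_left t).continuousOn
        (fun x _ => ht)
    have hcF : Continuous fun x => η (u x t) * ut x t := by
      rw [← continuousOn_univ]
      exact hFc.comp (f := fun x : ℝ => (x, t)) (Continuous.prodMk_left t).continuousOn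
        (fun x _ => ht)
    have hcH : Continuous fun x => |η (u x t)| := hHcont.comp (Continuous.prodMk_left t)
    have i1 : IntegrableOn (fun x => η (u x t) * ut x t + α * γ * |η (u x t)|) (Icc a b) :=
      (hcF.add (hcH.const_mul _)).continuousOn.integrableOn_compact isCompact_Icc
    have i2 : IntegrableOn (fun x => η (u x t) * uxx x t) (Icc a b) :=
      hcG.continuousOn.integrableOn_compact isCompact_Icc
    calc _ ≤ ∫ x in Icc a b, (η (u x t) * uxx x t + m x) :=
          setIntegral_mono i1 (i2.add hmi.integrableOn) (fun x => hpt t ht x)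
      _ = (∫ x in Icc a b, η (u x t) * uxx x t) + ∫ x in Icc a b, m x :=
          integral_add i2 hmi.integrableOn
      _ ≤ 0 + ∫ x, m x := add_le_add (hG t ht)
          (setIntegral_le_integral hmi (Filter.Eventually.of_forall hm0))
      _ = _ := zero_add _
  have hFge : -∫ x, |g x| ≤ ∫ p in Icc a b ×ˢ Icc (0 : ℝ) T, η (u p.1 p.2) * ut p.1 p.2 := by
    have hFi' := hFi
    rw [Measure.volume_eq_prod] at hFi' ⊢
    rw [setIntegral_prod _ hFi']
    simp only [hF]
    have hgc : Continuous g := by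
      have : g = fun x => u x 0 := by funext x; exact (hu0 x).symm
      rw [this]; exact hu_cont.comp (Continuous.prodMk_left 0)
    have huT : Continuous fun x => u x T := hu_cont.comp (Continuous.prodMk_left T)
    calc -∫ x, |g x| ≤ -∫ x in Icc a b, |g x| := neg_le_neg
          (setIntegral_le_integral hg.abs (Filter.Eventually.of_forall fun x => abs_nonneg _))
      _ = ∫ x in Icc a b, -|g x| := (integral_neg _).symm
      _ ≤ _ := by
        apply setIntegral_mono
        · exact hg.abs.neg.integrableOn
        · exact ((hφc.comp huT).sub (hφc.comp hgc)).continuousOn.integrableOn_compact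
            isCompact_Icc
        · intro x
          have h1 := hφ0 (u x T)
          have h2 := hφ1 (g x)
          simp only
          linarith
  have hsplit : ∫ p in Icc a b ×ˢ Icc (0 : ℝ) T,
      (η (u p.1 p.2) * ut p.1 p.2 + α * γ * |η (u p.1 p.2)|) =
      (∫ p in Icc a b ×ˢ Icc (0 : ℝ) T, η (u p.1 p.2) * ut p.1 p.2) +
      α * γ * ∫ p in Icc a b ×ˢ Icc (0 : ℝ) T, |η (u p.1 p.2)| := by
    rw [integral_add hFi (hHi.const_mul _), integral_const_mul]
  -- lower bound by the measure of the superlevel set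
  set S := {p : ℝ × ℝ | p.2 ∈ Icc (0 : ℝ) T ∧ 2 * ε ≤ |u p.1 p.2|} with hS
  have hSm : MeasurableSet S :=
    ((isClosed_Icc.preimage continuous_snd).inter
      (isClosed_le continuous_const hu_cont.abs)).measurableSet
  have hSR : S ⊆ Icc a b ×ˢ Icc (0 : ℝ) T := by
    intro p hp
    refine ⟨?_, hp.1⟩
    by_contra hn
    have := hu_supp p.1 p.2 (fun h => hn (Ioo_subset_Icc_self h))
    have h2 := hp.2
    rw [this, abs_zero] at h2
    linarith
  have hSle : volume.real S ≤ ∫ p in Icc a b ×ˢ Icc (0 : ℝ) T, |η (u p.1 p.2)| := by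
    calc volume.real S = ∫ p in S, (1 : ℝ) := by simp
      _ = ∫ p in S, |η (u p.1 p.2)| :=
          setIntegral_congr_fun hSm fun p hp => (hη2 _ hp.2).symm
      _ ≤ _ := setIntegral_mono_set hHi (Filter.Eventually.of_forall fun p => abs_nonneg _)
          (Filter.Eventually.of_forall hSR)
  have hαγ : 0 < α * γ := mul_pos hα' hγ
  have := mul_le_mul_of_nonneg_left hSle hαγ.le
  linarith


/-- **Support size bound, parabolic case.** Let `W = {(x,t) ∈ ℝ × [0,T] : u(x,t) ≠ 0}`.
If `u` solves `∂ₜu = ∂ₓₓu + f − γ sign u` on `W`, is supported in `K × [0,T]`,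
is `C¹` in `x` everywhere, `C¹` in `t` and `C²` in `x` on `W`, with `u(·,0) = g`, then
`αγ · μ₂(W) ≤ ∫ |g| + ∫₀ᵀ ∫ (|f| − βγ)⁺`. -/
theorem stmt_7 (γ T α β : ℝ) (hγ : 0 < γ) (hT : 0 < T)
    (hα : 0 ≤ α) (hβ : 0 ≤ β) (hαβ : α + β = 1) (hα' : 0 < α)
    (f g : ℝ → ℝ) (hf : Integrable f) (hg : Integrable g)
    (u ut ux uxx : ℝ → ℝ → ℝ)
    (K : Set ℝ) (hK : IsCompact K)
    (W : Set (ℝ × ℝ))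
    (hW : W = {p : ℝ × ℝ | p.2 ∈ Icc (0 : ℝ) T ∧ u p.1 p.2 ≠ 0})
    -- continuity of u
    (hu_cont : Continuous fun p : ℝ × ℝ => u p.1 p.2)
    -- support in K × [0,T]
    (hu_supp : ∀ x t, x ∉ K → u x t = 0)
    -- continuously differentiable in t and twice continuously differentiable in x on W
    (hut : ∀ p ∈ W, HasDerivAt (fun s => u p.1 s) (ut p.1 p.2) p.2)
    (huxx : ∀ p ∈ W, HasDerivAt (fun y => ux y p.2) (uxx p.1 p.2) p.1)
    (hut_cont : ContinuousOn (fun p : ℝ × ℝ => ut p.1 p.2) W)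
    (huxx_cont : ContinuousOn (fun p : ℝ × ℝ => uxx p.1 p.2) W)
    -- continuously differentiable in x everywhere
    (hux : ∀ x t, HasDerivAt (fun y => u y t) (ux x t) x)
    (hux_cont : Continuous fun p : ℝ × ℝ => ux p.1 p.2)
    -- initial data
    (hu0 : ∀ x, u x 0 = g x)
    -- the PDE on W
    (hpde : ∀ p ∈ W, ut p.1 p.2 = uxx p.1 p.2 + f p.1 - γ * Real.sign (u p.1 p.2)) :
    α * γ * (volume W).toReal ≤
      (∫ x, |g x|) + ∫ t in Icc (0 : ℝ) T, ∫ x, max (|f x| - β * γ) 0 := by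
  obtain ⟨a, b, hab, hKab⟩ : ∃ a b : ℝ, a ≤ b ∧ K ⊆ Ioo a b := by
    obtain ⟨R, hR⟩ := hK.isBounded.subset_ball 0
    refine ⟨-max R 0, max R 0, by linarith [le_max_right R 0], fun x hx => ?_⟩
    have := hR hx
    rw [Metric.mem_ball, Real.dist_eq, sub_zero] at this
    exact abs_lt.1 (this.trans_le (le_max_left _ _))
  have hb := superlevel_bound γ T α β hγ hT hβ hαβ hα' f g hf hg u ut ux uxx a b hab W hW hu_cont
    (fun x t hx => hu_supp x t fun h => hx (hKab h)) hut huxx hut_cont huxx_cont hux hux_cont hu0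
    hpde
  have hc : ∫ t in Icc (0 : ℝ) T, ∫ x, max (|f x| - β * γ) 0 =
      T * ∫ x, max (|f x| - β * γ) 0 := by
    rw [setIntegral_const]; simp [Measure.real, hT.le]
  rw [hc]
  set S : ℕ → Set (ℝ × ℝ) := fun n =>
    {p : ℝ × ℝ | p.2 ∈ Icc (0 : ℝ) T ∧ 2 * (1 / ((n : ℝ) + 1)) ≤ |u p.1 p.2|} with hS
  have hmono : Monotone S := by
    intro n k hnk p hp
    refine ⟨hp.1, le_trans ?_ hp.2⟩
    have := one_div_le_one_div_of_le (by positivity : (0 : ℝ) < (n : ℝ) + 1)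
      (by gcongr : (n : ℝ) + 1 ≤ (k : ℝ) + 1)
    linarith
  have hUn : W = ⋃ n, S n := by
    rw [hW]
    ext p
    simp only [mem_iUnion, hS, mem_setOf_eq]
    constructor
    · rintro ⟨h1, h2⟩
      obtain ⟨n, hn⟩ := exists_nat_one_div_lt (half_pos (abs_pos.2 h2))
      exact ⟨n, h1, by linarith⟩
    · rintro ⟨n, h1, h2⟩
      refine ⟨h1, fun h => ?_⟩
      rw [h, abs_zero] at h2
      have : 0 < 1 / ((n : ℝ) + 1) := by positivity
      linarith
  have hfin : volume W ≠ ⊤ := by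
    have hsub : W ⊆ Icc a b ×ˢ Icc (0 : ℝ) T := by
      rw [hW]
      intro p hp
      refine ⟨?_, hp.1⟩
      by_contra hn
      exact hp.2 (hu_supp p.1 p.2 fun h => hn (Ioo_subset_Icc_self (hKab h)))
    exact ((measure_mono hsub).trans_lt
      (isCompact_Icc.prod isCompact_Icc).measure_lt_top).ne
  have hlim : Filter.Tendsto (fun n => (volume (S n)).toReal) Filter.atTop
      (nhds (volume W).toReal) := by
    apply (ENNReal.tendsto_toReal hfin).comp
    rw [hUn]
    exact tendsto_measure_iUnion_atTop hmono
  refine le_of_tendsto (hlim.const_mul (α * γ)) (Filter.Eventually.of_forall fun n => ?_)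
  exact hb (1 / ((n : ℝ) + 1)) (by positivity)
end

section
/- (Traveling wave with compact one-sided support.) Let γ > 0 and σ > 0, and define v : ℝ → ℝ by v(s) = (γ/σ)s + (γ/σ²)(e^{−σs} − 1) for s ≥ 0 and v(s) = 0 for s < 0. Then: (i) v is continuously differentiable on ℝ with v(0) = v'(0) = 0; (ii) v(s) > 0 for every s > 0; (iii) v''(s) + σ v'(s) − γ = 0 for every s > 0; and consequently (iv) the function u(x,t) = v(x − σt) satisfies ∂_t u(x,t) − ∂²_x u(x,t) = −γ at every point with x > σt, and u(x,t) = 0 for x ≤ σt. -/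
/-- **Traveling wave with compact one-sided support.** For `γ, σ > 0`, the profile
`v(s) = (γ/σ)s + (γ/σ²)(e^{−σs} − 1)` for `s ≥ 0`, `v(s) = 0` for `s < 0`, is `C¹`
with `v(0) = v'(0) = 0`, positive for `s > 0`, solves `v'' + σv' − γ = 0` for `s > 0`;
hence `u(x,t) = v(x − σt)` satisfies `∂ₜu − ∂ₓₓu = −γ` where `x > σt` and vanishes
for `x ≤ σt`. -/
theorem stmt_8 (γ σ : ℝ) (hγ : 0 < γ) (hσ : 0 < σ) (v : ℝ → ℝ)
    (hv : v = fun s =>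
      if 0 ≤ s then γ / σ * s + γ / σ ^ 2 * (Real.exp (-σ * s) - 1) else 0) :
    (ContDiff ℝ 1 v ∧ v 0 = 0 ∧ deriv v 0 = 0) ∧
    (∀ s, 0 < s → 0 < v s) ∧
    (∀ s, 0 < s → deriv (deriv v) s + σ * deriv v s - γ = 0) ∧
    (∀ x t : ℝ, σ * t < x →
      deriv (fun τ => v (x - σ * τ)) t - deriv (deriv (fun y => v (y - σ * t))) x = -γ) ∧
    (∀ x t : ℝ, x ≤ σ * t → v (x - σ * t) = 0) := by
  have hσ0 : σ ≠ 0 := hσ.ne'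
  have hf : ∀ s : ℝ, HasDerivAt
      (fun s => γ / σ * s + γ / σ ^ 2 * (Real.exp (-σ * s) - 1))
      (γ / σ * (1 - Real.exp (-σ * s))) s := by
    intro s
    have h1 : HasDerivAt (fun s : ℝ => -σ * s) (-σ) s := by
      simpa using (hasDerivAt_id s).const_mul (-σ)
    have h2 : HasDerivAt (fun s : ℝ => γ / σ * s) (γ / σ) s := by
      simpa using (hasDerivAt_id s).const_mul (γ / σ)
    have h3 := h2.add ((h1.exp.sub_const 1).const_mul (γ / σ ^ 2))
    refine h3.congr_deriv ?_
    field_simp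
    ring
  have hpos : ∀ s, 0 ≤ s → v s = γ / σ * s + γ / σ ^ 2 * (Real.exp (-σ * s) - 1) := by
    intro s hs
    simp only [hv, if_pos hs]
  have hneg : ∀ s, s ≤ 0 → v s = 0 := by
    intro s hs
    rcases hs.lt_or_eq with h | h
    · simp only [hv, if_neg (not_le.mpr h)]
    · subst h
      simp [hv]
  have hd : ∀ s, HasDerivAt v (γ / σ * (1 - Real.exp (-σ * max s 0))) s := by
    intro s
    rcases lt_trichotomy s 0 with h | h | h
    · rw [max_eq_right h.le]
      have h0 : HasDerivAt (fun _ : ℝ => (0 : ℝ)) 0 s := hasDerivAt_const s 0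
      have h1 : HasDerivAt v 0 s := h0.congr_of_eventuallyEq (by
        filter_upwards [Iio_mem_nhds h] with y hy using hneg y (le_of_lt hy))
      simpa using h1
    · subst h
      have h1 : HasDerivWithinAt v 0 (Set.Iic 0) 0 :=
        (hasDerivWithinAt_const (0 : ℝ) (Set.Iic 0) (0 : ℝ)).congr
          (fun y hy => hneg y hy) (hneg 0 le_rfl)
      have h2 : HasDerivWithinAt v 0 (Set.Ici 0) 0 := by
        have h3 := (hf 0).hasDerivWithinAt (s := Set.Ici 0)
        have h4 := h3.congr (fun y hy => hpos y hy) (hpos 0 le_rfl)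
        simpa using h4
      have h5 := h1.union h2
      rw [Set.Iic_union_Ici, hasDerivWithinAt_univ] at h5
      simpa using h5
    · rw [max_eq_left h.le]
      exact (hf s).congr_of_eventuallyEq (by
        filter_upwards [Ioi_mem_nhds h] with y hy using hpos y (le_of_lt hy))
  have hderiv : deriv v = fun s => γ / σ * (1 - Real.exp (-σ * max s 0)) :=
    funext fun s => (hd s).deriv
  have hdd : ∀ s, 0 < s → HasDerivAt (deriv v) (γ * Real.exp (-σ * s)) s := by
    intro s hs
    have h1 : HasDerivAt (fun s : ℝ => -σ * s) (-σ) s := by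
      simpa using (hasDerivAt_id s).const_mul (-σ)
    have h2 := (h1.exp.const_sub 1).const_mul (γ / σ)
    have h3 : HasDerivAt (deriv v) _ s := h2.congr_of_eventuallyEq (by
      filter_upwards [Ioi_mem_nhds hs] with y hy
      rw [hderiv]
      simp only [max_eq_left (le_of_lt (Set.mem_Ioi.mp hy))])
    refine h3.congr_deriv ?_
    field_simp
  refine ⟨⟨?_, hneg 0 le_rfl, ?_⟩, ?_, ?_, ?_, ?_⟩
  · rw [contDiff_one_iff_deriv]
    refine ⟨fun s => (hd s).differentiableAt, ?_⟩
    rw [hderiv]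
    fun_prop
  · simp [hderiv]
  · intro s hs
    rw [hpos s hs.le]
    have h1 : -σ * s + 1 < Real.exp (-σ * s) :=
      Real.add_one_lt_exp (mul_ne_zero (neg_ne_zero.mpr hσ0) hs.ne')
    have h2 : γ / σ * s + γ / σ ^ 2 * (Real.exp (-σ * s) - 1)
        = γ / σ ^ 2 * (Real.exp (-σ * s) - (-σ * s + 1)) := by
      field_simp
      ring
    rw [h2]
    exact mul_pos (by positivity) (sub_pos.mpr h1)
  · intro s hs
    rw [(hdd s hs).deriv, hderiv]
    simp only [max_eq_left hs.le]
    field_simp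
    ring
  · intro x t hx
    have hs : 0 < x - σ * t := sub_pos.mpr hx
    have h1 : HasDerivAt (fun τ : ℝ => x - σ * τ) (-σ) t := by
      simpa using ((hasDerivAt_id t).const_mul σ).const_sub x
    have h2 := (hd (x - σ * t)).comp t h1
    have h3 : deriv (fun τ => v (x - σ * τ)) t = _ := h2.deriv
    have h4 : deriv (fun y => v (y - σ * t)) = fun y => deriv v (y - σ * t) :=
      funext fun y => deriv_comp_sub_const v (σ * t) y
    rw [h3, h4, deriv_comp_sub_const (deriv v), (hdd _ hs).deriv, max_eq_left hs.le]
    field_simp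
    ring
  · intro x t hx
    exact hneg _ (sub_nonpos.mpr hx)
end

section
/- (Exact compactly supported solution of the modified elliptic equation.) Let γ ∈ (0,1], let f(x) = (1 + x²)^{−3/2}, let a = √(γ^{−2} − 1) and c = (γ + γ^{−1})/2, and define u : ℝ → ℝ by u(x) = −(1 + x²)^{1/2} + (γ/2)x² + c for |x| ≤ a and u(x) = 0 for |x| > a. Then: (i) u is continuously differentiable on ℝ with u(±a) = u'(±a) = 0; (ii) u(x) ≥ 0 for all x, with u(x) > 0 for |x| < a when γ < 1; (iii) u''(x) = −f(x) + γ for every x with |x| < a; and (iv) f(±a) = γ³. -/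
lemma aux_minsq (y : ℝ) : HasDerivAt (fun t : ℝ => (min t 0) ^ 2) (2 * min y 0) y := by
  rcases lt_trichotomy y 0 with h | h | h
  · have h1 : HasDerivAt (fun t : ℝ => t ^ 2) (2 * y) y := by
      simpa using hasDerivAt_pow 2 y
    rw [min_eq_left h.le]
    refine h1.congr_of_eventuallyEq ?_
    filter_upwards [Iio_mem_nhds h] with t ht
    rw [min_eq_left (le_of_lt ht)]
  · subst h
    have h1 : (fun t : ℝ => (min t 0) ^ 2) =O[nhds 0] fun t => ‖t - 0‖ ^ 2 := by
      refine Asymptotics.IsBigO.of_bound 1 (Filter.Eventually.of_forall fun t => ?_)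
      simp only [sub_zero, Real.norm_eq_abs, sq_abs, one_mul, abs_of_nonneg (sq_nonneg (min t 0))]
      rcases le_total t 0 with h | h
      · rw [min_eq_left h]; exact le_abs_self _
      · rw [min_eq_right h]; simpa using sq_nonneg t
    have h2 := (h1.hasFDerivAt (𝕜 := ℝ) (by norm_num)).hasDerivAt
    simpa using h2
  · rw [min_eq_right h.le, mul_zero]
    refine (hasDerivAt_const y (0 : ℝ)).congr_of_eventuallyEq ?_
    filter_upwards [Ioi_mem_nhds h] with t ht
    rw [min_eq_right (le_of_lt ht)]; norm_num

lemma aux_sqrt (x : ℝ) :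
    HasDerivAt (fun t : ℝ => Real.sqrt (1 + t ^ 2)) (x / Real.sqrt (1 + x ^ 2)) x := by
  have h1 : HasDerivAt (fun t : ℝ => 1 + t ^ 2) (2 * x) x := by
    simpa using (hasDerivAt_pow 2 x).const_add 1
  convert h1.sqrt (by positivity) using 1
  field_simp

lemma aux_rpow (y : ℝ) (hy : 0 < y) : y ^ (-(3 : ℝ) / 2) = ((Real.sqrt y) ^ 3)⁻¹ := by
  rw [Real.sqrt_eq_rpow, ← Real.rpow_natCast, ← Real.rpow_mul hy.le, ← Real.rpow_neg hy.le]
  norm_num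

/-- **Exact compactly supported solution of the modified elliptic equation.** For
`γ ∈ (0,1]`, `f(x) = (1+x²)^{−3/2}`, `a = √(γ⁻² − 1)`, `c = (γ + γ⁻¹)/2`, the function
`u(x) = −√(1+x²) + (γ/2)x² + c` for `|x| ≤ a`, `u(x) = 0` for `|x| > a`, is `C¹` with
`u(±a) = u'(±a) = 0`, nonnegative (positive on `|x| < a` when `γ < 1`), satisfies
`u'' = −f + γ` on `|x| < a`, and `f(±a) = γ³`. -/
theorem stmt_9 (γ : ℝ) (hγ : γ ∈ Set.Ioc (0 : ℝ) 1)
    (f : ℝ → ℝ) (hfdef : f = fun x => (1 + x ^ 2) ^ (-(3 : ℝ) / 2))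
    (a c : ℝ) (ha : a = Real.sqrt (γ⁻¹ ^ 2 - 1)) (hc : c = (γ + γ⁻¹) / 2)
    (u : ℝ → ℝ)
    (hu : u = fun x =>
      if |x| ≤ a then -Real.sqrt (1 + x ^ 2) + γ / 2 * x ^ 2 + c else 0) :
    (ContDiff ℝ 1 u ∧ u a = 0 ∧ u (-a) = 0 ∧ deriv u a = 0 ∧ deriv u (-a) = 0) ∧
    ((∀ x, 0 ≤ u x) ∧ (γ < 1 → ∀ x, |x| < a → 0 < u x)) ∧
    (∀ x, |x| < a → deriv (deriv u) x = -f x + γ) ∧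
    (f a = γ ^ 3 ∧ f (-a) = γ ^ 3) := by
  obtain ⟨h0, h1⟩ := hγ
  set b := γ⁻¹ with hb
  have hgb : γ * b = 1 := mul_inv_cancel₀ h0.ne'
  have hb1 : 1 ≤ b := (one_le_inv₀ h0).2 h1
  have hb0 : 0 < b := by linarith
  have ha0 : 0 ≤ a := ha ▸ Real.sqrt_nonneg _
  have ha2 : a ^ 2 = b ^ 2 - 1 := by
    rw [ha, Real.sq_sqrt]; nlinarith
  have spos : ∀ x : ℝ, 0 < Real.sqrt (1 + x ^ 2) := fun x => by positivity
  have ssq : ∀ x : ℝ, Real.sqrt (1 + x ^ 2) ^ 2 = 1 + x ^ 2 := fun x =>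
    Real.sq_sqrt (by positivity)
  have hle : ∀ x : ℝ, |x| ≤ a ↔ Real.sqrt (1 + x ^ 2) ≤ b := fun x => by
    rw [Real.sqrt_le_left hb0.le, ← abs_of_nonneg ha0, ← sq_le_sq, ha2]
    constructor <;> intro h <;> linarith
  have hlt : ∀ x : ℝ, |x| < a → Real.sqrt (1 + x ^ 2) < b := fun x hx => by
    rw [← abs_of_nonneg ha0, ← sq_lt_sq, ha2] at hx
    rw [Real.sqrt_lt' hb0]; linarith
  have hsa : Real.sqrt (1 + a ^ 2) = b := by
    rw [ha2, add_sub_cancel, Real.sqrt_sq hb0.le]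
  have hform : u = fun x => γ / 2 * (min (Real.sqrt (1 + x ^ 2) - b) 0) ^ 2 := by
    rw [hu]; funext x
    by_cases h : |x| ≤ a
    · have h' := (hle x).1 h
      simp only [h, if_true]
      rw [min_eq_left (by linarith), hc]
      linear_combination (-γ / 2) * ssq x + (Real.sqrt (1 + x ^ 2) - b / 2) * hgb
    · have h' : b < Real.sqrt (1 + x ^ 2) := not_le.1 fun h2 => h ((hle x).2 h2)
      simp only [h, if_false]
      rw [min_eq_right (by linarith)]; norm_num
  have hder : ∀ x, HasDerivAt u
      (γ * min (Real.sqrt (1 + x ^ 2) - b) 0 * (x / Real.sqrt (1 + x ^ 2))) x := fun x => by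
    rw [hform]
    have h := ((aux_minsq (Real.sqrt (1 + x ^ 2) - b)).comp x
      ((aux_sqrt x).sub_const b)).const_mul (γ / 2)
    refine h.congr_deriv ?_
    ring
  have hd : deriv u =
      fun x => γ * min (Real.sqrt (1 + x ^ 2) - b) 0 * (x / Real.sqrt (1 + x ^ 2)) :=
    funext fun x => (hder x).deriv
  have hfa : f a = γ ^ 3 := by
    rw [hfdef]
    simp only
    rw [aux_rpow _ (by positivity), hsa, hb, inv_pow, inv_inv]
  refine ⟨⟨?_, ?_, ?_, ?_, ?_⟩, ⟨?_, ?_⟩, ?_, hfa, ?_⟩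
  · rw [contDiff_one_iff_deriv]
    refine ⟨fun x => (hder x).differentiableAt, ?_⟩
    rw [hd]
    have hs : Continuous fun x : ℝ => Real.sqrt (1 + x ^ 2) := by fun_prop
    exact (continuous_const.mul ((hs.sub continuous_const).min continuous_const)).mul
      (continuous_id.div hs fun x => (spos x).ne')
  · rw [hform]; simp [hsa]
  · rw [hform]; simp [hsa]
  · rw [hd]; simp [hsa]
  · rw [hd]; simp [hsa]
  · intro x; rw [hform]; positivity
  · intro _ x hx
    have h := hlt x hx
    rw [hform]
    simp only
    rw [min_eq_left (by linarith)]
    have : Real.sqrt (1 + x ^ 2) - b ≠ 0 := by linarith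
    positivity
  · intro x hx
    have hev : deriv u =ᶠ[nhds x] fun t => γ * t - t / Real.sqrt (1 + t ^ 2) := by
      filter_upwards [(isOpen_lt continuous_abs continuous_const).mem_nhds hx] with t ht
      have h := hlt t ht
      have hs := spos t
      rw [hd]
      simp only
      rw [min_eq_left (by linarith)]
      field_simp
      linear_combination (-t) * hgb
    rw [hev.deriv_eq]
    have h2 := ((hasDerivAt_id x).const_mul γ).sub
      ((hasDerivAt_id x).div (aux_sqrt x) (spos x).ne')
    have h3 := h2.deriv
    refine h3.trans ?_
    rw [hfdef]
    simp only [id]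
    rw [aux_rpow _ (by positivity)]
    have hs := spos x
    have hq := ssq x
    generalize Real.sqrt (1 + x ^ 2) = s at hs hq ⊢
    field_simp
    linear_combination (-1) * hq
  · rw [← hfa, hfdef]; simp
end
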